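/- Let P̂_n(q) be the Segre product of the subspace lattice B_n(q) with itself: the subposet of B_n(q) × B_n(q) consisting of pairs (X,Y) with dim X = dim Y. The Möbius function of P̂_n(q) between its minimum (0,0) and maximum (F_q^n, F_q^n) satisfies μ(0̂, 1̂) = (-1)^n W_n(q), where W_n(q) = ∑ q^{inv(σ)+inv(τ)} over pairs (σ,τ) of permutations of {1,...,n} with no common ascent. -/

import Mathlib

open Finset

/-- A common ascent of a pair of permutations of `{1,...,n}`:
an index `i` with `i+1 = j ≤ n` such that both permutations increase from `i` to `j`. -/
def CommonAscent {n : ℕ} (σ τ : Equiv.Perm (Fin n)) : Prop :=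
  ∃ i j : Fin n, (i : ℕ) + 1 = (j : ℕ) ∧ σ i < σ j ∧ τ i < τ j

instance {n : ℕ} : DecidablePred
    (fun p : Equiv.Perm (Fin n) × Equiv.Perm (Fin n) => CommonAscent p.1 p.2) := fun _ => by
  unfold CommonAscent; infer_instance

/-- The number of inversions of a permutation. -/
def inversions {n : ℕ} (σ : Equiv.Perm (Fin n)) : ℕ :=
  (Finset.univ.filter (fun p : Fin n × Fin n => p.1 < p.2 ∧ σ p.2 < σ p.1)).card

/-- `W n = ∑ q^(inv σ + inv τ)` over pairs of permutations with no common ascent,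
as a polynomial in `q`. -/
noncomputable def W (n : ℕ) : Polynomial ℚ :=
  ∑ p ∈ Finset.univ.filter
      (fun p : Equiv.Perm (Fin n) × Equiv.Perm (Fin n) => ¬ CommonAscent p.1 p.2),
    Polynomial.X ^ (inversions p.1 + inversions p.2)

open scoped Classical

/-- The Segre product of the subspace lattice `B_n(q)` with itself: pairs of subspaces
of `F_q^n` of equal dimension, ordered componentwise. -/
def SegrePoset (F : Type) [Field F] (n : ℕ) : Type :=
  {p : Submodule F (Fin n → F) × Submodule F (Fin n → F) //
    Module.finrank F p.1 = Module.finrank F p.2}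

instance (F : Type) [Field F] (n : ℕ) : PartialOrder (SegrePoset F n) :=
  inferInstanceAs (PartialOrder (Subtype _))

noncomputable instance (F : Type) [Field F] [Fintype F] (n : ℕ) : Fintype (SegrePoset F n) := by
  have : Finite (Submodule F (Fin n → F)) :=
    Finite.of_injective (fun X => (X : Set (Fin n → F))) SetLike.coe_injective
  have : Finite (SegrePoset F n) := by unfold SegrePoset; infer_instance
  exact Fintype.ofFinite _

noncomputable instance (F : Type) [Field F] [Fintype F] (n : ℕ) :
    LocallyFiniteOrder (SegrePoset F n) :=
  Fintype.toLocallyFiniteOrder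

/-- The bottom element `(0, 0)` of the Segre product. -/
def segreBot (F : Type) [Field F] (n : ℕ) : SegrePoset F n := ⟨(⊥, ⊥), rfl⟩

/-- The top element `(F_q^n, F_q^n)` of the Segre product. -/
def segreTop (F : Type) [Field F] (n : ℕ) : SegrePoset F n := ⟨(⊤, ⊤), rfl⟩

/-!
The statistic `inv` and the ascents of a permutation are read off its Lehmer code `(d₁, …, dₙ)`,
`0 ≤ dᵢ < i`: `inv` is the sum of the `dᵢ`, and `i` is an ascent iff `dᵢ₊₁ ≤ dᵢ`. Call a pair of
permutations of `{1, …, n}` appendable by `(a, b)` if it has no common ascent even after `a` and `b`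
are appended to the two codes. Inclusion-exclusion over the length `j` of a final run of common
ascents expresses the weighted number of appendable pairs as an alternating sum of the `W (n - j)`,
with coefficients that factor into a function of `a` and a function of `b`. Appending `(0, 0)`
always creates a common ascent when `n > 0`, so for `a = b = 0` this sum vanishes:
`∑ j + k = n, [n choose j]_q ^ 2 * (-1) ^ k * W k = 0`. As `[n choose j]_q ^ 2` is the number of
elements of rank `k` below an element of rank `n` of the Segre product, this is the recursion
defining the Möbius function.
-/

/-- The Gaussian binomial coefficient `[n choose k]_q`, defined by a `q`-Pascal recursion. -/
def gaussBinom {R : Type*} [CommSemiring R] (q : R) : ℕ → ℕ → R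
  | _, 0 => 1
  | 0, _ + 1 => 0
  | n + 1, k + 1 => gaussBinom q n k + q ^ (k + 1) * gaussBinom q n (k + 1)

section GaussBinom

variable {R S : Type*}

@[simp]
theorem gaussBinom_zero_right [CommSemiring R] (q : R) (n : ℕ) : gaussBinom q n 0 = 1 := by
  cases n <;> rfl

theorem gaussBinom_zero_succ [CommSemiring R] (q : R) (k : ℕ) : gaussBinom q 0 (k + 1) = 0 := rfl

theorem gaussBinom_succ_succ [CommSemiring R] (q : R) (n k : ℕ) :
    gaussBinom q (n + 1) (k + 1) = gaussBinom q n k + q ^ (k + 1) * gaussBinom q n (k + 1) := rfl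

theorem gaussBinom_eq_zero_of_lt [CommSemiring R] (q : R) {n k : ℕ} (h : n < k) :
    gaussBinom q n k = 0 := by
  induction n generalizing k with
  | zero => obtain ⟨k, rfl⟩ := Nat.exists_eq_succ_of_ne_zero h.ne'; rfl
  | succ n ih =>
    obtain ⟨k, rfl⟩ := Nat.exists_eq_succ_of_ne_zero (Nat.ne_zero_of_lt h)
    simp [gaussBinom_succ_succ, ih (Nat.lt_of_succ_lt_succ h), ih (Nat.lt_of_succ_lt h)]

@[simp]
theorem gaussBinom_self [CommSemiring R] (q : R) (n : ℕ) : gaussBinom q n n = 1 := by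
  induction n with
  | zero => rfl
  | succ n ih => simp [gaussBinom_succ_succ, ih, gaussBinom_eq_zero_of_lt q n.lt_succ_self]

theorem map_gaussBinom [CommSemiring R] [CommSemiring S] (f : R →+* S) (q : R) (n k : ℕ) :
    f (gaussBinom q n k) = gaussBinom (f q) n k := by
  induction n generalizing k with
  | zero => cases k <;> simp [gaussBinom_zero_succ]
  | succ n ih => cases k <;> simp [gaussBinom_succ_succ, ih]

theorem gaussBinom_succ_right_eq_sum [CommSemiring R] (q : R) (n k : ℕ) :
    gaussBinom q n (k + 1) =
      ∑ i ∈ range n, q ^ ((k + 1) * i) * gaussBinom q (n - 1 - i) k := by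
  induction n with
  | zero => rfl
  | succ n ih =>
    rw [sum_range_succ', gaussBinom_succ_succ, ih, mul_sum, add_comm]
    congr 1
    · refine sum_congr rfl fun i _ => ?_
      rw [show n + 1 - 1 - (i + 1) = n - 1 - i by omega]
      ring
    · simp

theorem prod_range_pow_succ_sub_pow [CommRing R] (q : R) (m b : ℕ) :
    ∏ i ∈ range (b + 1), (q ^ (m + 1) - q ^ i) =
      (q ^ (m + 1) - 1) * q ^ b * ∏ i ∈ range b, (q ^ m - q ^ i) := by
  have factor_q : ∏ i ∈ range b, (q ^ (m + 1) - q ^ (i + 1)) =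
      (∏ i ∈ range b, (q ^ m - q ^ i)) * q ^ b := by
    simp only [pow_succ, ← sub_mul]
    rw [← prod_mul_pow_card, card_range]
  rw [prod_range_succ', factor_q]
  ring

/-- For a prime power `q` this counts linearly independent `b`-tuples in `F_q^(a+b)` by their
span. -/
theorem gaussBinom_mul_prod_pow_sub_pow [CommRing R] (q : R) (a b : ℕ) :
    gaussBinom q (a + b) a * ∏ i ∈ range b, (q ^ b - q ^ i) =
      ∏ i ∈ range b, (q ^ (a + b) - q ^ i) := by
  induction a generalizing b with
  | zero => simp
  | succ a iha =>
    induction b with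
    | zero => simp
    | succ b ihb =>
      have hab := iha (b + 1)
      rw [prod_range_pow_succ_sub_pow q b, prod_range_succ,
        show a + (b + 1) = a + 1 + b by ring] at hab
      rw [show a + 1 + (b + 1) = a + 1 + b + 1 by ring, gaussBinom_succ_succ,
        prod_range_pow_succ_sub_pow, prod_range_pow_succ_sub_pow]
      linear_combination hab + q ^ (a + 1) * (q ^ (b + 1) - 1) * q ^ b * ihb

/-- The sum of `q ^ (d₁ + ⋯ + dⱼ)` over all `n - j ≥ d₁ ≥ ⋯ ≥ dⱼ ≥ a`: the weight of the
possible last `j` entries of a Lehmer code of length `n` that encode a run of ascents continued by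
appending `a`. -/
def runWeight {R : Type*} [CommSemiring R] (q : R) (n j a : ℕ) : R :=
  q ^ (j * a) * gaussBinom q (n - a) j

theorem runWeight_zero_left [CommSemiring R] (q : R) (n a : ℕ) : runWeight q n 0 a = 1 := by
  simp [runWeight]

theorem runWeight_zero_right [CommSemiring R] (q : R) (n j : ℕ) :
    runWeight q n j 0 = gaussBinom q n j := by
  simp [runWeight]

theorem sum_Ico_pow_mul_runWeight [CommSemiring R] (q : R) (n j a : ℕ) :
    ∑ d ∈ Ico a (n + 1), q ^ d * runWeight q n j d = runWeight q (n + 1) (j + 1) a := by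
  rw [sum_Ico_eq_sum_range, runWeight, gaussBinom_succ_right_eq_sum, mul_sum]
  refine sum_congr rfl fun i _ => ?_
  rw [runWeight, show n + 1 - a - 1 - i = n - (a + i) by omega]
  ring

theorem sum_fin_pow_mul_runWeight [CommSemiring R] (q : R) {n : ℕ} (j : ℕ) (a : Fin (n + 2)) :
    ∑ d : Fin (n + 1) with a ≤ d.castSucc, q ^ (d : ℕ) * runWeight q n j d =
      runWeight q (n + 1) (j + 1) a := by
  simp only [← sum_Ico_pow_mul_runWeight, sum_filter, Fin.le_def, Fin.val_castSucc]
  rw [Fin.sum_univ_eq_sum_range fun d => if (a : ℕ) ≤ d then q ^ d * runWeight q n j d else 0,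
    ← sum_filter]
  congr 1
  ext d
  simp only [mem_filter, mem_range, mem_Ico, and_comm]

end GaussBinom

section SnocPerm

variable {n : ℕ}

/-- The permutation of `Fin (n + 1)` whose last value is exceeded by exactly `d` other values, and
whose other values are in the same relative order as those of `π`. Iterating it builds a
permutation from its Lehmer code. -/
def snocPerm (d : Fin (n + 1)) (π : Equiv.Perm (Fin n)) : Equiv.Perm (Fin (n + 1)) :=
  ((finSuccEquiv' (Fin.last n)).trans (Equiv.optionCongr π)).trans (finSuccEquiv' d.rev).symm

@[simp]
theorem snocPerm_last (d : Fin (n + 1)) (π : Equiv.Perm (Fin n)) :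
    snocPerm d π (Fin.last n) = d.rev := by
  simp [snocPerm]

@[simp]
theorem snocPerm_castSucc (d : Fin (n + 1)) (π : Equiv.Perm (Fin n)) (i : Fin n) :
    snocPerm d π i.castSucc = d.rev.succAbove (π i) := by
  rw [← Fin.succAbove_last_apply]
  simp [snocPerm, -Fin.succAbove_last]

theorem snocPerm_bijective :
    Function.Bijective fun x : Fin (n + 1) × Equiv.Perm (Fin n) => snocPerm x.1 x.2 := by
  rw [Fintype.bijective_iff_injective_and_card]
  constructor
  · rintro ⟨d, π⟩ ⟨d', π'⟩ h
    obtain rfl : d = d' := by simpa using congrArg (fun σ => σ (Fin.last n)) h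
    refine Prod.ext rfl (Equiv.ext fun i => ?_)
    simpa using congrArg (fun σ => σ i.castSucc) h
  · simp [Fintype.card_perm, Nat.factorial_succ]

theorem sum_perm_eq_sum_snocPerm {M : Type*} [AddCommMonoid M]
    (f : Equiv.Perm (Fin (n + 1)) → M) : ∑ σ, f σ = ∑ d, ∑ π, f (snocPerm d π) := by
  rw [← Fintype.sum_prod_type']
  exact (snocPerm_bijective.sum_comp f).symm

theorem card_filter_rev_le_castSucc (d : Fin (n + 1)) : #{i : Fin n | d.rev ≤ i.castSucc} = d := by
  have h := card_filter_add_card_filter_not (s := (univ : Finset (Fin n)))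
    (fun i => (i : ℕ) < (d.rev : ℕ))
  rw [Fin.card_filter_val_lt, card_univ, Fintype.card_fin] at h
  simp only [Fin.le_def, Fin.val_castSucc, not_lt, Fin.val_rev] at *
  omega

theorem inversions_snocPerm (d : Fin (n + 1)) (π : Equiv.Perm (Fin n)) :
    inversions (snocPerm d π) = d + inversions π := by
  have last_inversions : ∑ i, (if d.rev ≤ (π i).castSucc then 1 else 0) = (d : ℕ) := by
    rw [Equiv.sum_comp π fun i => if d.rev ≤ i.castSucc then 1 else 0, ← card_filter,
      card_filter_rev_le_castSucc]
  simp only [inversions, card_filter, Fintype.sum_prod_type]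
  simp [Fin.sum_univ_castSucc, Fin.lt_succAbove_iff_le_castSucc, sum_add_distrib, last_inversions,
    Fin.castSucc_lt_last, (Fin.castSucc_lt_last _).not_gt, add_comm, -Finset.sum_boole]

theorem not_commonAscent_of_subsingleton [Subsingleton (Fin n)] (σ τ : Equiv.Perm (Fin n)) :
    ¬ CommonAscent σ τ :=
  fun ⟨_, _, _, hσ, _⟩ => hσ.ne (congrArg σ (Subsingleton.elim _ _))

theorem commonAscent_snocPerm (a b : Fin (n + 2)) (π ρ : Equiv.Perm (Fin (n + 1))) :
    CommonAscent (snocPerm a π) (snocPerm b ρ) ↔ CommonAscent π ρ ∨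
      ((π (Fin.last n)).castSucc < a.rev ∧ (ρ (Fin.last n)).castSucc < b.rev) := by
  constructor
  · rintro ⟨i, j, hij, hπ, hρ⟩
    induction i using Fin.lastCases with
    | last => exact absurd j.isLt (by rw [← hij, Fin.val_last]; exact lt_irrefl _)
    | cast i =>
      induction j using Fin.lastCases with
      | last =>
        obtain rfl : i = Fin.last n := by ext; simpa using hij
        right
        simpa [Fin.succAbove_lt_iff_castSucc_lt] using And.intro hπ hρ
      | cast j => exact .inl ⟨i, j, by simpa using hij, by simpa using hπ, by simpa using hρ⟩
  · rintro (⟨i, j, hij, hπ, hρ⟩ | ⟨hπ, hρ⟩)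
    · exact ⟨i.castSucc, j.castSucc, by simpa using hij, by simpa using hπ, by simpa using hρ⟩
    · exact ⟨(Fin.last n).castSucc, Fin.last (n + 1), by simp,
        by simpa [Fin.succAbove_lt_iff_castSucc_lt] using hπ,
        by simpa [Fin.succAbove_lt_iff_castSucc_lt] using hρ⟩

theorem commonAscent_snocPerm_snocPerm (a b : Fin (n + 2)) (c d : Fin (n + 1))
    (π ρ : Equiv.Perm (Fin n)) :
    CommonAscent (snocPerm a (snocPerm c π)) (snocPerm b (snocPerm d ρ)) ↔
      CommonAscent (snocPerm c π) (snocPerm d ρ) ∨ (a ≤ c.castSucc ∧ b ≤ d.castSucc) := by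
  simp only [commonAscent_snocPerm, snocPerm_last, ← Fin.rev_succ, Fin.rev_lt_rev,
    Fin.le_castSucc_iff]

end SnocPerm

section NoCommonAscent

variable (q : ℚ)

theorem eval_W (n : ℕ) :
    (W n).eval q = ∑ σ : Equiv.Perm (Fin n), ∑ τ : Equiv.Perm (Fin n),
      if CommonAscent σ τ then 0 else q ^ (inversions σ + inversions τ) := by
  rw [W, Polynomial.eval_finsetSum, sum_filter, Fintype.sum_prod_type]
  simp only [Polynomial.eval_pow, Polynomial.eval_X, ite_not]

theorem eval_W_zero : (W 0).eval q = 1 := by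
  simp [eval_W, not_commonAscent_of_subsingleton, inversions]

/-- The sum of `q ^ (inv π + inv ρ)` over the pairs `(π, ρ)` of permutations of `Fin n` that have
no common ascent even after appending last values with Lehmer codes `a` and `b`. -/
noncomputable def appendableSum (n : ℕ) (a b : Fin (n + 1)) : ℚ :=
  ∑ π, ∑ ρ, if CommonAscent (snocPerm a π) (snocPerm b ρ) then 0
    else q ^ (inversions π + inversions ρ)

theorem appendableSum_zero (a b : Fin 1) : appendableSum q 0 a b = 1 := by
  simp [appendableSum, not_commonAscent_of_subsingleton, inversions]

theorem eval_W_succ (n : ℕ) :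
    (W (n + 1)).eval q = ∑ a : Fin (n + 1), ∑ b : Fin (n + 1),
      q ^ (a + b : ℕ) * appendableSum q n a b := by
  simp only [eval_W, sum_perm_eq_sum_snocPerm, appendableSum, mul_sum, inversions_snocPerm]
  refine sum_congr rfl fun a _ => ?_
  rw [sum_comm]
  refine sum_congr rfl fun b _ => sum_congr rfl fun π _ => sum_congr rfl fun ρ _ => ?_
  split_ifs <;> ring

theorem appendableSum_succ_eq_sum_ite (n : ℕ) (a b : Fin (n + 2)) :
    appendableSum q (n + 1) a b = ∑ c : Fin (n + 1), ∑ d : Fin (n + 1),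
      if a ≤ c.castSucc ∧ b ≤ d.castSucc then 0
      else q ^ (c + d : ℕ) * appendableSum q n c d := by
  simp only [appendableSum, sum_perm_eq_sum_snocPerm (n := n), mul_sum, inversions_snocPerm,
    commonAscent_snocPerm_snocPerm]
  refine sum_congr rfl fun c _ => ?_
  rw [sum_comm]
  refine sum_congr rfl fun d _ => ?_
  split_ifs with h
  · simp [h]
  · refine sum_congr rfl fun π _ => sum_congr rfl fun ρ _ => ?_
    simp only [h, or_false]
    split_ifs <;> ring

theorem appendableSum_succ_zero_zero (n : ℕ) : appendableSum q (n + 1) 0 0 = 0 := by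
  simp [appendableSum_succ_eq_sum_ite]

theorem appendableSum_succ (n : ℕ) (a b : Fin (n + 2)) :
    appendableSum q (n + 1) a b = (W (n + 1)).eval q -
      ∑ c : Fin (n + 1) with a ≤ c.castSucc, ∑ d : Fin (n + 1) with b ≤ d.castSucc,
        q ^ (c + d : ℕ) * appendableSum q n c d := by
  simp only [appendableSum_succ_eq_sum_ite, eval_W_succ, sum_filter]
  rw [← sum_sub_distrib]
  refine sum_congr rfl fun c _ => ?_
  by_cases hc : a ≤ c.castSucc
  · simp only [hc, true_and, if_true, ← sum_sub_distrib]
    exact sum_congr rfl fun d _ => by split_ifs <;> simp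
  · simp [hc]

theorem neg_one_pow_mul_appendableSum (n : ℕ) (a b : Fin (n + 1)) :
    (-1) ^ n * appendableSum q n a b = ∑ p ∈ antidiagonal n,
      runWeight q n p.1 a * runWeight q n p.1 b * ((-1) ^ p.2 * (W p.2).eval q) := by
  induction n with
  | zero => simp [appendableSum_zero, runWeight_zero_left, eval_W_zero]
  | succ n ih =>
    have peel_run : ∑ c : Fin (n + 1) with a ≤ c.castSucc, ∑ d : Fin (n + 1) with b ≤ d.castSucc,
          q ^ (c + d : ℕ) * ((-1) ^ n * appendableSum q n c d) =
        ∑ p ∈ antidiagonal n, runWeight q (n + 1) (p.1 + 1) a * runWeight q (n + 1) (p.1 + 1) b *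
          ((-1) ^ p.2 * (W p.2).eval q) := by
      simp only [← sum_fin_pow_mul_runWeight, sum_mul_sum]
      simp only [sum_mul, mul_sum, ih]
      simp only [sum_comm (s := antidiagonal n)]
      refine sum_congr rfl fun c _ => sum_congr rfl fun d _ => sum_congr rfl fun p _ => ?_
      ring
    rw [Nat.antidiagonal_succ, sum_cons, sum_map]
    simp only [Function.Embedding.prodMap, Function.Embedding.coeFn_mk, Prod.map_fst, Prod.map_snd,
      Function.Embedding.refl_apply, runWeight_zero_left, Nat.succ_eq_add_one]
    rw [← peel_run, appendableSum_succ]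
    simp only [mul_left_comm _ ((-1 : ℚ) ^ n), ← mul_sum]
    ring

theorem sum_gaussBinom_sq_mul_eval_W (n : ℕ) :
    ∑ p ∈ antidiagonal n, gaussBinom q n p.1 ^ 2 * ((-1) ^ p.2 * (W p.2).eval q) =
      if n = 0 then 1 else 0 := by
  have h := neg_one_pow_mul_appendableSum q n 0 0
  simp only [Fin.val_zero, runWeight_zero_right, ← sq] at h
  rw [← h]
  cases n with
  | zero => simp [appendableSum_zero]
  | succ n => simp [appendableSum_succ_zero_zero]

end NoCommonAscent

open Module

section SubspaceCount

variable {K V : Type*} [DivisionRing K] [AddCommGroup V] [Module K V]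

theorem span_range_subtype_comp_eq [FiniteDimensional K V] {Z : Submodule K V} {k : ℕ}
    (hZ : finrank K Z = k) {s : Fin k → Z} (hs : LinearIndependent K s) :
    Submodule.span K (Set.range (Z.subtype ∘ s)) = Z := by
  rw [Set.range_comp, Submodule.span_image, hs.span_eq_top_of_card_eq_finrank' (by simp [hZ]),
    Submodule.map_subtype_top]

theorem sigma_linearIndependent_bijective [FiniteDimensional K V] (k : ℕ) :
    Function.Bijective fun s : Σ Z : {Z : Submodule K V // finrank K Z = k},
        {s : Fin k → Z.1 // LinearIndependent K s} =>
      (⟨Submodule.subtype _ ∘ s.2.1, s.2.2.map' _ (Submodule.ker_subtype _)⟩ :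
        {s : Fin k → V // LinearIndependent K s}) := by
  constructor
  · rintro ⟨⟨Z, hZ⟩, s, hs⟩ ⟨⟨Z', hZ'⟩, s', hs'⟩ h
    have h : Z.subtype ∘ s = Z'.subtype ∘ s' := congrArg Subtype.val h
    obtain rfl : Z = Z' := by
      rw [← span_range_subtype_comp_eq hZ hs, h, span_range_subtype_comp_eq hZ' hs']
    obtain rfl : s = s' := Z.injective_subtype.comp_left h
    rfl
  · rintro ⟨s, hs⟩
    exact ⟨⟨⟨Submodule.span K (Set.range s), by rw [finrank_span_eq_card hs, Fintype.card_fin]⟩,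
      _, linearIndependent_span hs⟩, rfl⟩

variable [Fintype K] [Finite V]

theorem cast_card_linearIndependent {k : ℕ} (hk : k ≤ finrank K V) :
    (Nat.card {s : Fin k → V // LinearIndependent K s} : ℤ) =
      ∏ i ∈ range k, ((Fintype.card K : ℤ) ^ finrank K V - Fintype.card K ^ i) := by
  rw [card_linearIndependent hk, ← Fin.prod_univ_eq_prod_range, Nat.cast_prod]
  refine prod_congr rfl fun i _ => ?_
  rw [Nat.cast_sub (Nat.pow_le_pow_right Fintype.card_pos (i.2.le.trans hk))]
  push_cast
  rfl

theorem card_submodule_mul_prod_pow_sub_pow {k : ℕ} (hk : k ≤ finrank K V) :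
    (Nat.card {Z : Submodule K V // finrank K Z = k} : ℤ) *
        ∏ i ∈ range k, ((Fintype.card K : ℤ) ^ k - Fintype.card K ^ i) =
      ∏ i ∈ range k, ((Fintype.card K : ℤ) ^ finrank K V - Fintype.card K ^ i) := by
  have : Fintype {Z : Submodule K V // finrank K Z = k} := Fintype.ofFinite _
  rw [← cast_card_linearIndependent hk,
    ← Nat.card_congr (Equiv.ofBijective _ (sigma_linearIndependent_bijective k)), Nat.card_sigma,
    Nat.cast_sum, Nat.card_eq_fintype_card, ← card_univ, ← nsmul_eq_mul, ← sum_const]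
  refine sum_congr rfl fun Z _ => ?_
  rw [cast_card_linearIndependent Z.2.ge, Z.2]

theorem card_submodule_finrank_eq {j k : ℕ} (h : j + k = finrank K V) :
    Nat.card {Z : Submodule K V // finrank K Z = k} =
      gaussBinom (Fintype.card K) (finrank K V) j := by
  have hq : (1 : ℤ) < Fintype.card K := mod_cast Fintype.one_lt_card
  have prod_ne_zero : ∏ i ∈ range k, ((Fintype.card K : ℤ) ^ k - Fintype.card K ^ i) ≠ 0 :=
    prod_ne_zero_iff.2 fun i hi =>
      (sub_pos.2 (pow_lt_pow_right₀ hq (mem_range.1 hi))).ne'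
  refine Nat.cast_injective (R := ℤ) (mul_right_cancel₀ prod_ne_zero ?_)
  rw [card_submodule_mul_prod_pow_sub_pow (by omega), ← h, ← gaussBinom_mul_prod_pow_sub_pow]
  congr 1
  exact (map_gaussBinom (Nat.castRingHom ℤ) _ _ _).symm

theorem card_submodule_le_finrank_eq (X : Submodule K V) {j k : ℕ} (h : j + k = finrank K X) :
    Nat.card {Z : Submodule K V // Z ≤ X ∧ finrank K Z = k} =
      gaussBinom (Fintype.card K) (finrank K X) j := by
  rw [← card_submodule_finrank_eq h]
  refine Nat.card_congr (.trans (Equiv.subtypeSubtypeEquivSubtypeInter (· ≤ X) _).symm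
    (X.mapIic.toEquiv.subtypeEquiv fun Z => ?_).symm)
  exact Eq.congr_left (Submodule.finrank_map_subtype_eq X Z).symm

end SubspaceCount

theorem mu_eq_of_sum_Icc_eq {𝕜 α : Type*} [Ring 𝕜] [PartialOrder α] [LocallyFiniteOrder α]
    {a : α} {f : α → 𝕜}
    (hf : ∀ x, a ≤ x → ∑ y ∈ Icc a x, f y = if a = x then 1 else 0) {x : α} (hx : a ≤ x) :
    IncidenceAlgebra.mu 𝕜 a x = f x := by
  induction hd : #(Icc a x) using Nat.strong_induction_on generalizing x with
  | _ d ih =>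
    have h := hf x hx
    rw [← IncidenceAlgebra.sum_Icc_mu_right (𝕜 := 𝕜) a x, ← Ico_insert_right hx,
      sum_insert right_notMem_Ico, sum_insert right_notMem_Ico] at h
    refine (add_right_cancel (h.trans (congrArg _ (sum_congr rfl fun y hy => ?_)))).symm
    obtain ⟨hay, hyx⟩ := mem_Ico.1 hy
    exact ih _ (hd ▸ card_lt_card (Icc_ssubset_Icc_right hx le_rfl hyx)) hay rfl

namespace SegrePoset

variable {F : Type} [Field F] {n : ℕ}

/-- The rank of an element of the Segre product: the common dimension of its two components. -/
noncomputable def dim (x : SegrePoset F n) : ℕ := finrank F x.1.1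

theorem le_def {x y : SegrePoset F n} : x ≤ y ↔ x.1.1 ≤ y.1.1 ∧ x.1.2 ≤ y.1.2 := Iff.rfl

theorem segreBot_le (x : SegrePoset F n) : segreBot F n ≤ x := le_def.2 ⟨bot_le, bot_le⟩

theorem dim_mono {x y : SegrePoset F n} (h : x ≤ y) : x.dim ≤ y.dim := Submodule.finrank_mono h.1

theorem dim_eq_zero_iff {x : SegrePoset F n} : x.dim = 0 ↔ segreBot F n = x := by
  constructor
  · intro h
    exact Subtype.ext (Prod.ext (Submodule.finrank_eq_zero.1 h).symm
      (Submodule.finrank_eq_zero.1 (x.2.symm.trans h)).symm)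
  · rintro rfl
    exact finrank_bot F _

theorem dim_segreTop : (segreTop F n).dim = n := (finrank_top F _).trans (finrank_fin_fun F)

/-- The elements of dimension `k` below `(X, Y)` are the pairs of `k`-dimensional subspaces of
`X` and `Y`. -/
def leDimEquiv (x : SegrePoset F n) (k : ℕ) :
    {y : SegrePoset F n // y ≤ x ∧ y.dim = k} ≃
      {Y : Submodule F (Fin n → F) // Y ≤ x.1.1 ∧ finrank F Y = k} ×
        {Y : Submodule F (Fin n → F) // Y ≤ x.1.2 ∧ finrank F Y = k} where
  toFun y := (⟨y.1.1.1, y.2.1.1, y.2.2⟩, ⟨y.1.1.2, y.2.1.2, y.1.2.symm.trans y.2.2⟩)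
  invFun z := ⟨⟨(z.1.1, z.2.1), z.1.2.2.trans z.2.2.2.symm⟩, ⟨z.1.2.1, z.2.2.1⟩, z.1.2.2⟩

variable [Fintype F]

theorem card_filter_le_dim_eq (x : SegrePoset F n) {j k : ℕ} (h : j + k = x.dim) :
    #{y : SegrePoset F n | y ≤ x ∧ y.dim = k} = gaussBinom (Fintype.card F) x.dim j ^ 2 := by
  rw [← Fintype.card_subtype, ← Nat.card_eq_fintype_card, Nat.card_congr (leDimEquiv x k),
    Nat.card_prod, card_submodule_le_finrank_eq _ h, card_submodule_le_finrank_eq _ (h.trans x.2),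
    ← x.2, sq, dim]

theorem sum_Icc_segreBot {R : Type*} [CommSemiring R] (x : SegrePoset F n) (f : ℕ → R) :
    ∑ y ∈ Icc (segreBot F n) x, f y.dim =
      ∑ p ∈ antidiagonal x.dim, gaussBinom (Fintype.card F : R) x.dim p.1 ^ 2 * f p.2 := by
  rw [← sum_fiberwise_of_maps_to (g := fun y : SegrePoset F n => (x.dim - y.dim, y.dim))
    fun y hy => mem_antidiagonal.2 (Nat.sub_add_cancel (dim_mono (mem_Icc.1 hy).2))]
  refine sum_congr rfl fun p hp => ?_
  have hp := mem_antidiagonal.1 hp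
  have fiber_eq : ({y ∈ Icc (segreBot F n) x | (x.dim - y.dim, y.dim) = p} : Finset _) =
      ({y | y ≤ x ∧ y.dim = p.2} : Finset _) := by
    ext y
    simp only [mem_filter, mem_Icc, segreBot_le, true_and, mem_univ, Prod.ext_iff]
    exact and_congr_right fun _ => by omega
  have hcard := congrArg (Nat.castRingHom R) (card_filter_le_dim_eq x hp)
  rw [map_pow, map_gaussBinom, Nat.coe_castRingHom] at hcard
  rw [fiber_eq, sum_congr rfl fun y hy => congrArg f (mem_filter.1 hy).2.2, sum_const,
    nsmul_eq_mul, hcard]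

theorem mu_segreBot (x : SegrePoset F n) :
    IncidenceAlgebra.mu ℚ (segreBot F n) x =
      (-1) ^ x.dim * (W x.dim).eval (Fintype.card F : ℚ) := by
  refine mu_eq_of_sum_Icc_eq
    (f := fun y => (-1) ^ y.dim * (W y.dim).eval (Fintype.card F : ℚ)) (fun y _ => ?_)
    (segreBot_le x)
  rw [sum_Icc_segreBot y fun k => (-1) ^ k * (W k).eval (Fintype.card F : ℚ),
    sum_gaussBinom_sq_mul_eval_W]
  simp only [dim_eq_zero_iff]

end SegrePoset

/-- the Möbius function of the Segre product of `B_n(q)` with itself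
between its minimum and maximum equals `(-1)^n W_n(q)`, where `q` is the order of the
field. -/
theorem mobius_segre (F : Type) [Field F] [Fintype F] (n : ℕ) :
    IncidenceAlgebra.mu ℚ (segreBot F n) (segreTop F n) =
      (-1 : ℚ) ^ n * (W n).eval (Fintype.card F : ℚ) := by
  rw [SegrePoset.mu_segreBot, SegrePoset.dim_segreTop]
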